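/- Let L be the logic M𝒜 with 𝒜 ⊆ {N, C, P, D, 4}, or one of the logics M5, MP5, M45, MP45, MD45, K45, KD45. Then every derivation in G_LConW extended with the multicut rule can be converted into a derivation in G_LConW (without multicut) with the same endsequent. -/

import Mathlib

/-- Monomodal formulas. -/
inductive Fm : Type
  | var : ℕ → Fm
  | bot : Fm
  | top : Fm
  | neg : Fm → Fm
  | and : Fm → Fm → Fm
  | or : Fm → Fm → Fm
  | imp : Fm → Fm → Fm
  | box : Fm → Fm

/-- Evaluation of the propositional structure of a formula under an assignment
`v` of truth values to formulas (only used on atoms, i.e. propositional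
variables and boxed formulas). -/
def evalP (v : Fm → Prop) : Fm → Prop
  | .var n => v (.var n)
  | .bot => False
  | .top => True
  | .neg A => ¬ evalP v A
  | .and A B => evalP v A ∧ evalP v B
  | .or A B => evalP v A ∨ evalP v B
  | .imp A B => evalP v A → evalP v B
  | .box A => v (.box A)

/-- `A` is an instance of a classical propositional tautology. -/
def Taut (A : Fm) : Prop := ∀ v, evalP v A

/-- A component of a (linear nested) sequent: a two-sided multiset sequent. -/
abbrev Cmp := Multiset Fm × Multiset Fm

/-- A set of additional axioms for monotone modal logic `M`, among
`C, N, P, D, T, 4, 5`. -/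
structure MAx where
  c : Bool := false
  n : Bool := false
  p : Bool := false
  d : Bool := false
  t : Bool := false
  four : Bool := false
  five : Bool := false

/-- Hilbert-style theoremhood in the extension `M𝒜` of monotone modal logic
`M` (classical propositional logic, the congruence rule and the axiom `M`)
with the axioms in `𝒜`. -/
inductive MThm (Ax : MAx) : Fm → Prop
  | taut {A} : Taut A → MThm Ax A
  | mp {A B} : MThm Ax (.imp A B) → MThm Ax A → MThm Ax B
  | cong {A B} : MThm Ax (.imp A B) → MThm Ax (.imp B A) →
      MThm Ax (.imp (.box A) (.box B))
  | axM {A B} : MThm Ax (.imp (.box (.and A B)) (.and (.box A) (.box B)))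
  | axC {A B} : Ax.c = true →
      MThm Ax (.imp (.and (.box A) (.box B)) (.box (.and A B)))
  | axN : Ax.n = true → MThm Ax (.box .top)
  | axP : Ax.p = true → MThm Ax (.neg (.box .bot))
  | axD {A} : Ax.d = true → MThm Ax (.neg (.and (.box A) (.box (.neg A))))
  | axT {A} : Ax.t = true → MThm Ax (.imp (.box A) A)
  | ax4 {A} : Ax.four = true → MThm Ax (.imp (.box A) (.box (.box A)))
  | ax5 {A} : Ax.five = true → MThm Ax (.or (.box A) (.box (.neg (.box A))))

/-- The sequent calculus `G_M𝒜ConW` for extensions of monotone modal logic,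
optionally (for `cut = true`) extended with the multicut rule: the classical
propositional sequent calculus with explicit weakening and contraction, the
rule `M` (if `C ∉ 𝒜`) or `C` (if `C ∈ 𝒜`), a rule for each further axiom in
`𝒜` (the rule `N` also being present whenever `5 ∈ 𝒜`, since `N` is derivable
in `M5`), and the required combination rules `D4`, `D5`, `CD`, `C4`, `CD4`,
`K4`, `K45`, `KD45`, each included exactly when the corresponding combination
of axioms is present. -/
inductive GM (Ax : MAx) (cut : Bool) : Multiset Fm → Multiset Fm → Prop
  | init {Γ Δ : Multiset Fm} {m : ℕ} : GM Ax cut (Fm.var m ::ₘ Γ) (Fm.var m ::ₘ Δ)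
  | botL {Γ Δ} : GM Ax cut (Fm.bot ::ₘ Γ) Δ
  | topR {Γ Δ} : GM Ax cut Γ (Fm.top ::ₘ Δ)
  | negL {Γ Δ A} : GM Ax cut Γ (A ::ₘ Δ) → GM Ax cut (Fm.neg A ::ₘ Γ) Δ
  | negR {Γ Δ A} : GM Ax cut (A ::ₘ Γ) Δ → GM Ax cut Γ (Fm.neg A ::ₘ Δ)
  | andL {Γ Δ A B} : GM Ax cut (A ::ₘ B ::ₘ Γ) Δ → GM Ax cut (Fm.and A B ::ₘ Γ) Δ
  | andR {Γ Δ A B} : GM Ax cut Γ (A ::ₘ Δ) → GM Ax cut Γ (B ::ₘ Δ) →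
      GM Ax cut Γ (Fm.and A B ::ₘ Δ)
  | orL {Γ Δ A B} : GM Ax cut (A ::ₘ Γ) Δ → GM Ax cut (B ::ₘ Γ) Δ →
      GM Ax cut (Fm.or A B ::ₘ Γ) Δ
  | orR {Γ Δ A B} : GM Ax cut Γ (A ::ₘ B ::ₘ Δ) → GM Ax cut Γ (Fm.or A B ::ₘ Δ)
  | impL {Γ Δ A B} : GM Ax cut (B ::ₘ Γ) Δ → GM Ax cut Γ (A ::ₘ Δ) →
      GM Ax cut (Fm.imp A B ::ₘ Γ) Δ
  | impR {Γ Δ A B} : GM Ax cut (A ::ₘ Γ) (B ::ₘ Δ) → GM Ax cut Γ (Fm.imp A B ::ₘ Δ)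
  | wkL {Γ Δ A} : GM Ax cut Γ Δ → GM Ax cut (A ::ₘ Γ) Δ
  | wkR {Γ Δ A} : GM Ax cut Γ Δ → GM Ax cut Γ (A ::ₘ Δ)
  | conL {Γ Δ A} : GM Ax cut (A ::ₘ A ::ₘ Γ) Δ → GM Ax cut (A ::ₘ Γ) Δ
  | conR {Γ Δ A} : GM Ax cut Γ (A ::ₘ A ::ₘ Δ) → GM Ax cut Γ (A ::ₘ Δ)
  | ruleM {A B} : Ax.c = false →
      GM Ax cut {A} {B} → GM Ax cut {Fm.box A} {Fm.box B}
  | ruleC {Γ : Multiset Fm} {A} : Ax.c = true → Γ ≠ 0 →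
      GM Ax cut Γ {A} → GM Ax cut (Γ.map Fm.box) {Fm.box A}
  | ruleN {A} : (Ax.n = true ∨ Ax.five = true) →
      GM Ax cut 0 {A} → GM Ax cut 0 {Fm.box A}
  | ruleP {A} : Ax.p = true →
      GM Ax cut {A} 0 → GM Ax cut {Fm.box A} 0
  | ruleD {A B} : Ax.d = true →
      GM Ax cut {A, B} 0 → GM Ax cut {Fm.box A, Fm.box B} 0
  | ruleT {Γ Δ A} : Ax.t = true →
      GM Ax cut (A ::ₘ Γ) Δ → GM Ax cut (Fm.box A ::ₘ Γ) Δ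
  | rule4 {A B} : Ax.four = true →
      GM Ax cut {Fm.box A} {B} → GM Ax cut {Fm.box A} {Fm.box B}
  | rule5 {A B} : Ax.five = true →
      GM Ax cut 0 {A, Fm.box B} → GM Ax cut 0 {Fm.box A, Fm.box B}
  | ruleD4 {A B} : Ax.c = false → Ax.four = true →
      (Ax.d = true ∨ (Ax.p = true ∧ Ax.five = true)) →
      GM Ax cut {A, Fm.box B} 0 → GM Ax cut {Fm.box A, Fm.box B} 0
  | ruleD5 {A B} : Ax.c = false → Ax.five = true →
      (Ax.d = true ∨ (Ax.p = true ∧ Ax.four = true)) →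
      GM Ax cut {A} {Fm.box B} → GM Ax cut {Fm.box A} {Fm.box B}
  | ruleCD {Γ : Multiset Fm} : Ax.c = true → (Ax.p = true ∨ Ax.d = true) →
      GM Ax cut Γ 0 → GM Ax cut (Γ.map Fm.box) 0
  | ruleC4 {Γ Sg : Multiset Fm} {B} : Ax.c = true → Ax.four = true →
      Γ + Sg ≠ 0 →
      GM Ax cut (Γ.map Fm.box + Sg) {B} →
      GM Ax cut (Γ.map Fm.box + Sg.map Fm.box) {Fm.box B}
  | ruleCD4 {Γ Sg : Multiset Fm} : Ax.c = true → Ax.four = true →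
      (Ax.p = true ∨ Ax.d = true) →
      GM Ax cut (Γ.map Fm.box + Sg) 0 →
      GM Ax cut (Γ.map Fm.box + Sg.map Fm.box) 0
  | ruleK4 {Γ Sg : Multiset Fm} {A} : Ax.c = true → Ax.n = true → Ax.four = true →
      GM Ax cut (Γ.map Fm.box + Sg) {A} →
      GM Ax cut (Γ.map Fm.box + Sg.map Fm.box) {Fm.box A}
  | ruleK45 {Γ Sg Δ : Multiset Fm} {A} : Ax.c = true → Ax.n = true →
      Ax.four = true → Ax.five = true →
      GM Ax cut (Γ.map Fm.box + Sg) (A ::ₘ Δ.map Fm.box) →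
      GM Ax cut (Γ.map Fm.box + Sg.map Fm.box) (Fm.box A ::ₘ Δ.map Fm.box)
  | ruleKD45 {Γ Sg Δ : Multiset Fm} : Ax.c = true → Ax.n = true →
      Ax.four = true → Ax.five = true → (Ax.p = true ∨ Ax.d = true) →
      GM Ax cut (Γ.map Fm.box + Sg) (Δ.map Fm.box) →
      GM Ax cut (Γ.map Fm.box + Sg.map Fm.box) (Δ.map Fm.box)
  | mcut {Γ Δ Sg Pp : Multiset Fm} {A} {nn mm : ℕ} : cut = true →
      1 ≤ nn → 1 ≤ mm →
      GM Ax cut Γ (Δ + Multiset.replicate nn A) →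
      GM Ax cut (Sg + Multiset.replicate mm A) Pp →
      GM Ax cut (Γ + Sg) (Δ + Pp)

/-- The additional axioms of the logic `M5`. -/
def axM5 : MAx := { five := true }
/-- The additional axioms of the logic `MP5`. -/
def axMP5 : MAx := { p := true, five := true }
/-- The additional axioms of the logic `M45`. -/
def axM45 : MAx := { four := true, five := true }
/-- The additional axioms of the logic `MP45`. -/
def axMP45 : MAx := { p := true, four := true, five := true }
/-- The additional axioms of the logic `MD45`. -/
def axMD45 : MAx := { d := true, four := true, five := true }
/-- The additional axioms of the logic `K45 = MNC45`. -/
def axK45 : MAx := { c := true, n := true, four := true, five := true }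
/-- The additional axioms of the logic `KD45 = MNCD45`. -/
def axKD45 : MAx := { c := true, n := true, d := true, four := true, five := true }

/-!
A sequent is read as the set of its signed formulas, so that weakening and contraction cost nothing
and multicut becomes cut. All modal rules are then instances of one scheme, in which every
principal formula `□A` occurs in the premiss either *open*, as `A`, or *kept*, as `□A`; the axioms
only restrict how many formulas of each kind there are.

Cut is eliminated by induction on the cut formula and on both derivations. The main case is a cut
on `□B` between two modal inferences. The kept occurrences of `□B` in the premiss of one inference
are cut against the conclusion of the other inference, so that the other principal formulas of the
latter, all kept, take their place. The remaining open occurrences of `B` are removed by one cut on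
`B`. That the combined inference is again an instance of the scheme is an arithmetic fact about the
numbers of open and kept formulas.
-/

/-! ### Signed formulas and modes -/

/-- Signed formulas: `ant A` stands for an occurrence of `A` in the antecedent of a sequent and
`suc A` for one in the succedent. A sequent is then a set of signed formulas. -/
inductive Signed : Type
  | ant : Fm → Signed
  | suc : Fm → Signed

namespace Signed

/-- The sets of signed formulas added in the premisses of the propositional rule whose principal
formula is `F`. Variables and boxes are given the branch `{F}` itself, so that every signed formula
is equivalent to its branches. -/
def branches : Signed → Set (Set Signed)
  | ant (.var m) => {{ant (.var m)}}
  | suc (.var m) => {{suc (.var m)}}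
  | ant .bot => ∅
  | suc .bot => {∅}
  | ant .top => {∅}
  | suc .top => ∅
  | ant (.neg A) => {{suc A}}
  | suc (.neg A) => {{ant A}}
  | ant (.and A B) => {{ant A, ant B}}
  | suc (.and A B) => {{suc A}, {suc B}}
  | ant (.or A B) => {{ant A}, {ant B}}
  | suc (.or A B) => {{suc A, suc B}}
  | ant (.imp A B) => {{ant B}, {suc A}}
  | suc (.imp A B) => {{suc B, ant A}}
  | ant (.box A) => {{ant (.box A)}}
  | suc (.box A) => {{suc (.box A)}}

/-- The signed variables and boxes, on which no propositional rule acts. -/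
def IsAtomic (F : Signed) : Prop := F.branches = {{F}}

theorem isAtomic_ant_var (m : ℕ) : (ant (.var m)).IsAtomic := rfl

theorem isAtomic_suc_var (m : ℕ) : (suc (.var m)).IsAtomic := rfl

theorem IsAtomic.mem_of_mem_insert {F G : Signed} {b X : Set Signed} (hG : G.IsAtomic)
    (hb : b ∈ F.branches) (hbX : b ⊆ X) (h : G ∈ insert F X) : G ∈ X := by
  rcases h with rfl | h
  · rw [hG, Set.mem_singleton_iff] at hb
    exact hbX (hb ▸ Set.mem_singleton G)
  · exact h

end Signed

/-- The ways in which the principal formula `□A` of a modal inference can occur in the premiss: as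
`□A` itself (*kept*) or as `A` (*open*), on either side of the sequent. -/
inductive Mode : Type
  | keptAnt
  | openAnt
  | openSuc
  | keptSuc
  deriving DecidableEq

namespace Mode

/-- The kept mode on the same side of the sequent. -/
def keep : Mode → Mode
  | keptAnt | openAnt => keptAnt
  | openSuc | keptSuc => keptSuc

theorem card_eq_sum_count (m : Multiset Mode) :
    m.card = m.count keptAnt + m.count openAnt + m.count openSuc + m.count keptSuc := by
  induction m using Multiset.induction_on with
  | empty => rfl
  | cons k m ih => cases k <;> simp [ih] <;> omega

theorem count_map_keep (k : Mode) (m : Multiset Mode) :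
    (m.map keep).count k = match k with
      | keptAnt => m.count keptAnt + m.count openAnt
      | keptSuc => m.count openSuc + m.count keptSuc
      | openAnt | openSuc => 0 := by
  induction m using Multiset.induction_on with
  | empty => cases k <;> rfl
  | cons l m ih =>
    rw [Multiset.map_cons, Multiset.count_cons, ih]
    cases k <;> cases l <;> simp [keep] <;> omega

end Mode

/-- The combinations of modes that the modal rules of `G_L` allow in one inference. An inference
without open formulas has its conclusion as premiss, so admitting it is harmless; this makes the
admitted combinations closed under cuts. -/
structure MAx.Admits (Ax : MAx) (m : Multiset Mode) : Prop where
  count_openSuc_le : m.count .openSuc ≤ 1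
  four : m.count .keptAnt ≠ 0 → Ax.four = true
  five : m.count .keptSuc ≠ 0 → Ax.five = true
  n_or_five : m.count .openSuc ≠ 0 → m.count .keptAnt + m.count .openAnt = 0 →
    Ax.n = true ∨ Ax.five = true
  p_or_d : m.count .openSuc = 0 → m.count .openAnt ≠ 0 → Ax.p = true ∨ Ax.d = true
  card_le : Ax.c = false → m.card ≤ 2
  d : Ax.c = false → m.count .openAnt = 2 → Ax.d = true
  -- The side conditions of `D4` and `D5`, in a form common to both since the kept formula already
  -- provides the axiom `4` or `5`.
  d_or_p45 : Ax.c = false → m.count .openAnt ≠ 0 → m.count .keptAnt + m.count .keptSuc ≠ 0 →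
    Ax.d = true ∨ Ax.p = true ∧ Ax.four = true ∧ Ax.five = true

/-- The axiom sets without `T` for which the modal rules of `G_L` are closed under cuts: in the
presence of `5`, the axiom `C` forces `N` and `4`, and the axiom `D` forces `4`. -/
structure MAx.CombinationClosed (Ax : MAx) : Prop where
  t : Ax.t = false
  n : Ax.five = true → Ax.c = true → Ax.n = true
  four : Ax.five = true → Ax.c = true ∨ Ax.d = true → Ax.four = true

namespace MAx.Admits
open Multiset Mode

variable {Ax : MAx} {m₀ m₁ : Multiset Mode} {i j k l : ℕ}

theorem cut_keptSuc (hAx : Ax.CombinationClosed) (hj : j ≠ 0) (hkl : k + l ≠ 0)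
    (h₀ : Ax.Admits (m₀ + replicate i openSuc + replicate j keptSuc))
    (h₁ : Ax.Admits (m₁ + replicate k openAnt + replicate l keptAnt)) :
    Ax.Admits (m₀ + m₁.map keep + replicate i openSuc) := by
  have := hAx.four
  cases h₀; cases h₁
  simp only [count_add, count_replicate, card_eq_sum_count, reduceCtorEq, reduceIte] at *
  constructor <;>
    simp only [count_add, count_map_keep, count_replicate, card_eq_sum_count, reduceCtorEq,
      reduceIte] <;>
    grind

theorem cut_keptAnt (hij : i + j ≠ 0) (hl : l ≠ 0)
    (h₀ : Ax.Admits (m₀ + replicate i openSuc + replicate j keptSuc))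
    (h₁ : Ax.Admits (m₁ + replicate k openAnt + replicate l keptAnt)) :
    Ax.Admits (m₁ + m₀.map keep + replicate k openAnt) := by
  cases h₀; cases h₁
  simp only [count_add, count_replicate, card_eq_sum_count, reduceCtorEq, reduceIte] at *
  constructor <;>
    simp only [count_add, count_map_keep, count_replicate, card_eq_sum_count, reduceCtorEq,
      reduceIte] <;>
    grind

theorem cut_open (hi : i ≠ 0) (hj : j ≠ 0)
    (h₀ : Ax.Admits (m₀ + replicate i openSuc))
    (h₁ : Ax.Admits (m₁ + replicate j openAnt)) :
    Ax.Admits (m₀ + m₁) := by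
  cases h₀; cases h₁
  simp only [count_add, count_replicate, card_eq_sum_count, reduceCtorEq, reduceIte] at *
  constructor <;> simp only [count_add, card_eq_sum_count] <;> grind

end MAx.Admits

namespace Mode

/-- The occurrence in the premiss of the principal formula `□A` with mode `k`. -/
def premiss : Mode → Fm → Signed
  | keptAnt, A => .ant (.box A)
  | openAnt, A => .ant A
  | openSuc, A => .suc A
  | keptSuc, A => .suc (.box A)

/-- The occurrence in the conclusion of the principal formula `□A` with mode `k`. -/
def conclusion (k : Mode) : Fm → Signed :=
  k.keep.premiss

end Mode

section Modal
open Mode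

variable {r : Multiset (Mode × Fm)}

/-- The premiss of the modal inference with principal formulas `□A` of mode `k`, for `(k, A)` in
`r`. -/
def modalPremiss (r : Multiset (Mode × Fm)) : Set Signed :=
  {F | ∃ p ∈ r, p.1.premiss p.2 = F}

/-- The modal inference with the same conclusion as `r` in which all formulas are kept. -/
def keepAll (r : Multiset (Mode × Fm)) : Multiset (Mode × Fm) :=
  r.map (Prod.map keep id)

/-- The conclusion of the modal inference `r`. -/
def modalConclusion (r : Multiset (Mode × Fm)) : Set Signed :=
  modalPremiss (keepAll r)

theorem modalPremiss_add (r s : Multiset (Mode × Fm)) :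
    modalPremiss (r + s) = modalPremiss r ∪ modalPremiss s := by
  ext F
  simp only [modalPremiss, Multiset.mem_add, or_and_right, exists_or, Set.mem_ofPred_eq,
    Set.mem_union]

theorem modalPremiss_add_replicate_subset (r : Multiset (Mode × Fm)) (n : ℕ) (k : Mode) (A : Fm) :
    modalPremiss (r + Multiset.replicate n (k, A)) ⊆ insert (k.premiss A) (modalPremiss r) := by
  rintro F ⟨p, hp, rfl⟩
  rcases Multiset.mem_add.1 hp with hp | hp
  · exact .inr ⟨p, hp, rfl⟩
  · rw [Multiset.eq_of_mem_replicate hp]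
    exact .inl rfl

theorem keepAll_add (r s : Multiset (Mode × Fm)) : keepAll (r + s) = keepAll r + keepAll s :=
  Multiset.map_add ..

theorem keepAll_replicate (n : ℕ) (k : Mode) (A : Fm) :
    keepAll (Multiset.replicate n (k, A)) = Multiset.replicate n (k.keep, A) :=
  Multiset.map_replicate ..

theorem modalConclusion_add (r s : Multiset (Mode × Fm)) :
    modalConclusion (r + s) = modalConclusion r ∪ modalConclusion s := by
  rw [modalConclusion, keepAll_add, modalPremiss_add, modalConclusion, modalConclusion]

theorem keepAll_keepAll (r : Multiset (Mode × Fm)) : keepAll (keepAll r) = keepAll r := by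
  refine (Multiset.map_map ..).trans (Multiset.map_congr rfl fun p _ => ?_)
  rcases p with ⟨_ | _, A⟩ <;> rfl

theorem map_fst_keepAll (r : Multiset (Mode × Fm)) :
    (keepAll r).map Prod.fst = (r.map Prod.fst).map keep := by
  simp [keepAll]

theorem exists_box_of_mem_modalConclusion {F : Signed} (h : F ∈ modalConclusion r) :
    ∃ A, F = .ant (.box A) ∨ F = .suc (.box A) := by
  obtain ⟨p, hp, rfl⟩ := h
  obtain ⟨⟨k, A⟩, -, rfl⟩ := Multiset.mem_map.1 hp
  cases k <;> simp [keep, premiss]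

theorem isAtomic_of_mem_modalConclusion {F : Signed} (h : F ∈ modalConclusion r) :
    F.IsAtomic := by
  obtain ⟨A, rfl | rfl⟩ := exists_box_of_mem_modalConclusion h <;> rfl

theorem exists_notMem_eq_add_replicate {α : Type*} (p : α) (s : Multiset α) :
    ∃ t n, p ∉ t ∧ s = t + Multiset.replicate n p := by
  classical
  refine ⟨s.filter (p ≠ ·), s.count p, by simp, ?_⟩
  rw [← Multiset.filter_eq, add_comm, Multiset.filter_add_not]

end Modal

/-! ### The set-based calculus and its cut rule -/

/-- Derivability of the sequent given by a set of signed formulas, read as a refutation of the set.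
Weakening and contraction are built in, and a single rule scheme covers all modal rules. -/
inductive Refutable (Ax : MAx) : Set Signed → Prop
  | init {m : ℕ} {X : Set Signed} : .ant (.var m) ∈ X → .suc (.var m) ∈ X → Refutable Ax X
  | branch {F : Signed} {X : Set Signed} :
      F ∈ X → (∀ b ∈ F.branches, Refutable Ax (b ∪ X)) → Refutable Ax X
  | modal {r : Multiset (Mode × Fm)} {X : Set Signed} :
      Ax.Admits (r.map Prod.fst) → Refutable Ax (modalPremiss r) → modalConclusion r ⊆ X →
        Refutable Ax X

namespace Refutable

variable {Ax : MAx} {F : Signed} {X Y : Set Signed}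

/-- `C` is a condition on the context under which `F` is redundant: propositional inferences on `F`
can then be replaced by one of their premisses, which leaves the axioms and modal inferences. -/
theorem of_subset_insert {C : Set Signed → Prop} (hC : ∀ X Y, X ⊆ Y → C X → C Y)
    (hF : ∃ b ∈ F.branches, ∀ X, C X → b ⊆ insert F X)
    (hinit : ∀ m X, C X → .ant (.var m) ∈ insert F X → .suc (.var m) ∈ insert F X →
      Refutable Ax X)
    (hmodal : ∀ r, Ax.Admits (r.map Prod.fst) → Refutable Ax (modalPremiss r) →
      (∀ X, C X → modalPremiss r ⊆ insert F X → Refutable Ax X) →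
      ∀ X, C X → modalConclusion r ⊆ insert F X → Refutable Ax X)
    (h : Refutable Ax Y) (hX : C X) (hYX : Y ⊆ insert F X) : Refutable Ax X := by
  induction h generalizing X with
  | init hant hsuc => exact hinit _ X hX (hYX hant) (hYX hsuc)
  | branch hG _ ih =>
    rcases hYX hG with rfl | hGX
    · obtain ⟨b, hb, hbX⟩ := hF
      exact ih b hb hX (Set.union_subset (hbX X hX) hYX)
    · exact branch hGX fun b hb => ih b hb (hC _ _ Set.subset_union_right hX) <|
        (Set.union_subset_union_right b hYX).trans (Set.union_insert ..).subset
  | modal hr h hs ih => exact hmodal _ hr h (fun _ => ih) X hX (hs.trans hYX)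

theorem mono (h : Refutable Ax X) (hXY : X ⊆ Y) : Refutable Ax Y := by
  induction h generalizing Y with
  | init hant hsuc => exact init (hXY hant) (hXY hsuc)
  | branch hF _ ih => exact branch (hXY hF) fun b hb => ih b hb (Set.union_subset_union_right b hXY)
  | modal hr h hs => exact modal hr h (hs.trans hXY)

theorem insert_iff :
    Refutable Ax (insert F X) ↔ ∀ b ∈ F.branches, Refutable Ax (b ∪ X) := by
  refine ⟨fun h b hb => ?_, fun h =>
    branch (Set.mem_insert F X) fun b hb =>
      (h b hb).mono (Set.union_subset_union_right b (Set.subset_insert F X))⟩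
  refine of_subset_insert (C := (b ⊆ ·)) (fun _ _ hXY h => h.trans hXY)
    ⟨b, hb, fun X h => h.trans (Set.subset_insert F X)⟩ (fun m X hX hant hsuc => ?_)
    (fun r hr h _ X hX hs => ?_) h Set.subset_union_left
    (Set.insert_subset_insert Set.subset_union_right)
  · exact init ((Signed.isAtomic_ant_var m).mem_of_mem_insert hb hX hant)
      ((Signed.isAtomic_suc_var m).mem_of_mem_insert hb hX hsuc)
  · exact modal hr h fun G hG =>
      (isAtomic_of_mem_modalConclusion hG).mem_of_mem_insert hb hX (hs hG)

theorem cut_var {m : ℕ} (h₀ : Refutable Ax (insert (.ant (.var m)) X))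
    (h₁ : Refutable Ax (insert (.suc (.var m)) X)) : Refutable Ax X := by
  refine of_subset_insert (C := fun X => Refutable Ax (insert (.ant (.var m)) X))
    (fun _ _ hXY h => h.mono (Set.insert_subset_insert hXY))
    ⟨{.suc (.var m)}, rfl, by simp⟩ (fun n X hX hant hsuc => ?_)
    (fun r hr h _ X _ hs => ?_) h₁ h₀ subset_rfl
  · replace hant : .ant (.var n) ∈ X := by simpa using hant
    rcases hsuc with hmn | hsuc
    · obtain rfl : n = m := by simpa using hmn
      rwa [Set.insert_eq_of_mem hant] at hX
    · exact init hant hsuc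
  · refine modal hr h fun G hG => (hs hG).resolve_left ?_
    rintro rfl
    simpa using exists_box_of_mem_modalConclusion hG

end Refutable

section
open Multiset Mode

variable {Ax : MAx} {r r' r₀ r₁ : Multiset (Mode × Fm)} {B : Fm} {X : Set Signed}

theorem exists_add_of_modalConclusion_subset_insert {k : Mode} (hk : k.keep ≠ k)
    (h : modalConclusion r ⊆ insert (k.conclusion B) X) :
    ∃ s i j, r = s + replicate i (k, B) + replicate j (k.keep, B) ∧
      modalConclusion s ⊆ X := by
  obtain ⟨t, j, ht, rfl⟩ := exists_notMem_eq_add_replicate (k.keep, B) r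
  obtain ⟨s, i, hs, rfl⟩ := exists_notMem_eq_add_replicate (k, B) t
  refine ⟨s, i, j, rfl, fun F hF => (h ?_).resolve_left ?_⟩
  · simp only [modalConclusion_add]
    exact .inl (.inl hF)
  · rintro rfl
    obtain ⟨_, hp, hF⟩ := hF
    obtain ⟨⟨l, A⟩, hl, rfl⟩ := mem_map.1 hp
    cases k <;> cases l <;> simp_all [keep, premiss, conclusion]

theorem modalConclusion_add_replicate_subset (r : Multiset (Mode × Fm)) (i j : ℕ) (k : Mode)
    (A : Fm) :
    modalConclusion (r + replicate i (k, A) + replicate j (k.keep, A)) ⊆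
      insert (k.conclusion A) (modalConclusion r) := by
  have hk : k.keep.keep = k.keep := by cases k <;> rfl
  rw [modalConclusion, keepAll_add, keepAll_add, keepAll_replicate, keepAll_replicate, hk,
    add_assoc, ← replicate_add]
  exact modalPremiss_add_replicate_subset ..

/-- The modal inference `r` is admitted and its premiss is derivable. -/
def Applicable (Ax : MAx) (r : Multiset (Mode × Fm)) : Prop :=
  Ax.Admits (r.map Prod.fst) ∧ Refutable Ax (modalPremiss r)

/-- Every kept occurrence of `□B` is replaced by the other formulas of the inference `r'` that
introduces `□B` on the opposite side, all of them kept. -/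
theorem Applicable.exists_cut_kept {k l : Mode} {i j i' j' : ℕ}
    (h : Applicable Ax (r + replicate i (k, B) + replicate j (k.keep, B)))
    (hadm : j ≠ 0 → Ax.Admits (r.map Prod.fst + (r'.map Prod.fst).map keep + replicate i k))
    (ih : ∀ X, modalConclusion (r' + replicate i' (l, B) + replicate j' (l.keep, B)) ⊆
        insert (l.conclusion B) X →
      modalPremiss (r + replicate i (k, B) + replicate j (k.keep, B)) ⊆
        insert (k.conclusion B) X → Refutable Ax X) :
    ∃ s, Applicable Ax (s + replicate i (k, B)) ∧
      modalConclusion s ⊆ modalConclusion r ∪ modalConclusion r' := by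
  rcases eq_or_ne j 0 with rfl | hj
  · exact ⟨r, by simpa using h, Set.subset_union_left⟩
  · refine ⟨r + keepAll r', ⟨by simpa [map_fst_keepAll] using hadm hj, ih _ ?_ ?_⟩, ?_⟩
    · refine (modalConclusion_add_replicate_subset ..).trans (Set.insert_subset_insert ?_)
      rw [modalPremiss_add, modalPremiss_add]
      exact Set.subset_union_right.trans Set.subset_union_left
    · refine (modalPremiss_add_replicate_subset ..).trans (Set.insert_subset_insert ?_)
      rw [add_right_comm, modalPremiss_add _ (keepAll r')]
      exact Set.subset_union_left
    · rw [modalConclusion_add, modalConclusion, modalConclusion, keepAll_keepAll, modalConclusion]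

theorem Applicable.cut_box (hAx : Ax.CombinationClosed)
    (hcut : ∀ X, Refutable Ax (insert (.ant B) X) → Refutable Ax (insert (.suc B) X) →
      Refutable Ax X)
    (h₀ : Applicable Ax r₀) (h₁ : Applicable Ax r₁)
    (ih₀ : ∀ X, modalConclusion r₁ ⊆ insert (.ant (.box B)) X →
      modalPremiss r₀ ⊆ insert (.suc (.box B)) X → Refutable Ax X)
    (ih₁ : ∀ X, modalConclusion r₀ ⊆ insert (.suc (.box B)) X →
      modalPremiss r₁ ⊆ insert (.ant (.box B)) X → Refutable Ax X)
    (hX₀ : modalConclusion r₀ ⊆ insert (.suc (.box B)) X)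
    (hX₁ : modalConclusion r₁ ⊆ insert (.ant (.box B)) X) : Refutable Ax X := by
  obtain ⟨r₀, i, j, rfl, hrX₀⟩ :=
    exists_add_of_modalConclusion_subset_insert (k := openSuc) (by decide) hX₀
  obtain ⟨r₁, k, l, rfl, hrX₁⟩ :=
    exists_add_of_modalConclusion_subset_insert (k := openAnt) (by decide) hX₁
  by_cases hij : i + j = 0
  · obtain ⟨rfl, rfl⟩ := Nat.add_eq_zero_iff.1 hij
    exact .modal h₀.1 h₀.2 (by simpa using hrX₀)
  by_cases hkl : k + l = 0
  · obtain ⟨rfl, rfl⟩ := Nat.add_eq_zero_iff.1 hkl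
    exact .modal h₁.1 h₁.2 (by simpa using hrX₁)
  have hr₀ := h₀.1
  have hr₁ := h₁.1
  simp only [Multiset.map_add, map_replicate] at hr₀ hr₁
  obtain ⟨s₀, ⟨hs₀, hprem₀⟩, hsX₀⟩ :=
    h₀.exists_cut_kept (fun hj => hr₀.cut_keptSuc hAx hj hkl hr₁) ih₀
  obtain ⟨s₁, ⟨hs₁, hprem₁⟩, hsX₁⟩ :=
    h₁.exists_cut_kept (fun hl => hr₀.cut_keptAnt hij hl hr₁) ih₁
  replace hsX₀ := hsX₀.trans (Set.union_subset hrX₀ hrX₁)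
  replace hsX₁ := hsX₁.trans (Set.union_subset hrX₁ hrX₀)
  rcases eq_or_ne i 0 with rfl | hi
  · exact .modal hs₀ hprem₀ (by simpa using hsX₀)
  rcases eq_or_ne k 0 with rfl | hk
  · exact .modal hs₁ hprem₁ (by simpa using hsX₁)
  have hs : Ax.Admits ((s₀ + s₁).map Prod.fst) := by
    simp only [Multiset.map_add, map_replicate] at hs₀ hs₁ ⊢
    exact hs₀.cut_open hi hk hs₁
  refine .modal hs (hcut _ (hprem₁.mono ?_) (hprem₀.mono ?_)) ?_
  · refine (modalPremiss_add_replicate_subset ..).trans (Set.insert_subset_insert ?_)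
    exact modalPremiss_add s₀ s₁ ▸ Set.subset_union_right
  · refine (modalPremiss_add_replicate_subset ..).trans (Set.insert_subset_insert ?_)
    exact modalPremiss_add s₀ s₁ ▸ Set.subset_union_left
  · exact modalConclusion_add s₀ s₁ ▸ Set.union_subset hsX₀ hsX₁

end

namespace Refutable

variable {Ax : MAx} {B : Fm} {X : Set Signed}

theorem cut_box (hAx : Ax.CombinationClosed)
    (hcut : ∀ X, Refutable Ax (insert (.ant B) X) → Refutable Ax (insert (.suc B) X) →
      Refutable Ax X)
    (h₀ : Refutable Ax (insert (.ant (.box B)) X))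
    (h₁ : Refutable Ax (insert (.suc (.box B)) X)) : Refutable Ax X := by
  refine of_subset_insert (C := fun X => Refutable Ax (insert (.ant (.box B)) X))
    (fun _ _ hXY h => h.mono (Set.insert_subset_insert hXY)) ⟨_, rfl, by simp⟩
    (fun m X _ hant hsuc => init (by simpa using hant) (by simpa using hsuc))
    (fun r₀ hr₀ h₀ ih₀ X hX hX₀ => ?_) h₁ h₀ subset_rfl
  refine of_subset_insert (C := fun X => modalConclusion r₀ ⊆ insert (.suc (.box B)) X)
    (fun _ _ hXY h => h.trans (Set.insert_subset_insert hXY)) ⟨_, rfl, by simp⟩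
    (fun m X _ hant hsuc => init (by simpa using hant) (by simpa using hsuc))
    (fun r₁ hr₁ h₁ ih₁ X hX₀ hX₁ => ?_) hX hX₀ subset_rfl
  exact Applicable.cut_box hAx hcut ⟨hr₀, h₀⟩ ⟨hr₁, h₁⟩ (fun X hX => ih₀ X (modal hr₁ h₁ hX)) ih₁
    hX₀ hX₁

theorem cut (hAx : Ax.CombinationClosed) (A : Fm) (h₀ : Refutable Ax (insert (.ant A) X))
    (h₁ : Refutable Ax (insert (.suc A) X)) : Refutable Ax X := by
  induction A generalizing X with
  | var m => exact cut_var h₀ h₁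
  | bot => simpa [insert_iff, Signed.branches] using h₁
  | top => simpa [insert_iff, Signed.branches] using h₀
  | neg A ih =>
    simp only [insert_iff (F := .ant (.neg A)), insert_iff (F := .suc (.neg A)), Signed.branches,
      Set.mem_singleton_iff, forall_eq, Set.singleton_union] at h₀ h₁
    exact ih h₁ h₀
  | and A B ihA ihB =>
    rw [insert_iff] at h₀ h₁
    simp only [Signed.branches, Set.mem_singleton_iff, Set.mem_insert_iff, forall_eq,
      forall_eq_or_imp, Set.singleton_union, Set.insert_union] at h₀ h₁
    refine ihA (ihB ?_ ?_) h₁.1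
    · rwa [Set.insert_comm]
    · exact h₁.2.mono (Set.insert_subset_insert (Set.subset_insert ..))
  | or A B ihA ihB =>
    rw [insert_iff] at h₀ h₁
    simp only [Signed.branches, Set.mem_singleton_iff, Set.mem_insert_iff, forall_eq,
      forall_eq_or_imp, Set.singleton_union, Set.insert_union] at h₀ h₁
    refine ihA h₀.1 (ihB ?_ ?_)
    · exact h₀.2.mono (Set.insert_subset_insert (Set.subset_insert ..))
    · rwa [Set.insert_comm]
  | imp A B ihA ihB =>
    rw [insert_iff] at h₀ h₁
    simp only [Signed.branches, Set.mem_singleton_iff, Set.mem_insert_iff, forall_eq,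
      forall_eq_or_imp, Set.singleton_union, Set.insert_union] at h₀ h₁
    exact ihA (ihB (h₀.1.mono (Set.insert_subset_insert (Set.subset_insert ..))) h₁) h₀.2
  | box A ih => exact cut_box hAx (fun _ => ih) h₀ h₁

end Refutable

/-! ### Translations between the calculi -/

/-- The two-sided sequent `Γ ⇒ Δ` as a set of signed formulas. -/
def sequent (Γ Δ : Multiset Fm) : Set Signed :=
  {F | match F with
    | .ant A => A ∈ Γ
    | .suc A => A ∈ Δ}

theorem ant_mem_sequent {A : Fm} {Γ Δ : Multiset Fm} : .ant A ∈ sequent Γ Δ ↔ A ∈ Γ := .rfl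

theorem suc_mem_sequent {A : Fm} {Γ Δ : Multiset Fm} : .suc A ∈ sequent Γ Δ ↔ A ∈ Δ := .rfl

theorem sequent_cons_left (A : Fm) (Γ Δ : Multiset Fm) :
    sequent (A ::ₘ Γ) Δ = insert (.ant A) (sequent Γ Δ) := by
  ext (B | B) <;> simp [ant_mem_sequent, suc_mem_sequent]

theorem sequent_cons_right (A : Fm) (Γ Δ : Multiset Fm) :
    sequent Γ (A ::ₘ Δ) = insert (.suc A) (sequent Γ Δ) := by
  ext (B | B) <;> simp [ant_mem_sequent, suc_mem_sequent]

theorem sequent_subset_sequent {Γ Γ' Δ Δ' : Multiset Fm} (hΓ : Γ ⊆ Γ') (hΔ : Δ ⊆ Δ') :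
    sequent Γ Δ ⊆ sequent Γ' Δ' := by
  rintro (A | A) hA
  exacts [hΓ hA, hΔ hA]

section
open Multiset Mode

/-- The modal inference from `□G, S ⇒ D, □E` to `□G, □S ⇒ □D, □E`. -/
def marked (G S D E : Multiset Fm) : Multiset (Mode × Fm) :=
  G.map (keptAnt, ·) + S.map (openAnt, ·) + D.map (openSuc, ·) + E.map (keptSuc, ·)

theorem exists_marked (r : Multiset (Mode × Fm)) : ∃ G S D E, r = marked G S D E := by
  induction r using Multiset.induction_on with
  | empty => exact ⟨0, 0, 0, 0, rfl⟩
  | cons p r ih =>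
    obtain ⟨k, A⟩ := p
    obtain ⟨G, S, D, E, rfl⟩ := ih
    cases k
    · exact ⟨A ::ₘ G, S, D, E, by simp [marked]⟩
    · exact ⟨G, A ::ₘ S, D, E, by simp [marked]⟩
    · exact ⟨G, S, A ::ₘ D, E, by simp [marked]⟩
    · exact ⟨G, S, D, A ::ₘ E, by simp [marked]⟩

variable {Ax : MAx} {cut : Bool} {Γ Γ' Δ Δ' : Multiset Fm}

theorem modalPremiss_marked (G S D E : Multiset Fm) :
    modalPremiss (marked G S D E) = sequent (G.map .box + S) (D + E.map .box) := by
  ext (B | B) <;>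
    simp [modalPremiss, marked, premiss, ant_mem_sequent, suc_mem_sequent, or_and_right, exists_or]

theorem modalConclusion_marked (G S D E : Multiset Fm) :
    modalConclusion (marked G S D E) =
      sequent (G.map .box + S.map .box) (D.map .box + E.map .box) := by
  ext (B | B) <;>
    simp [modalConclusion, keepAll, keep, modalPremiss, marked, premiss, ant_mem_sequent,
      suc_mem_sequent, or_and_right, exists_or]

theorem map_fst_marked (G S D E : Multiset Fm) :
    (marked G S D E).map Prod.fst = replicate G.card keptAnt + replicate S.card openAnt +
      replicate D.card openSuc + replicate E.card keptSuc := by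
  simp [marked]

theorem Refutable.of_marked (G S D E : Multiset Fm)
    (hr : Ax.Admits (replicate G.card keptAnt + replicate S.card openAnt +
      replicate D.card openSuc + replicate E.card keptSuc))
    (h : Refutable Ax (sequent (G.map .box + S) (D + E.map .box))) :
    Refutable Ax (sequent (G.map .box + S.map .box) (D.map .box + E.map .box)) :=
  .modal (map_fst_marked .. ▸ hr) (modalPremiss_marked .. ▸ h) (modalConclusion_marked ..).subset

theorem Refutable.mcut (hAx : Ax.CombinationClosed) {A : Fm} {m n : ℕ}
    (h₀ : Refutable Ax (sequent Γ (Δ + replicate n A)))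
    (h₁ : Refutable Ax (sequent (Γ' + replicate m A) Δ')) :
    Refutable Ax (sequent (Γ + Γ') (Δ + Δ')) := by
  refine cut hAx A (h₁.mono ?_) (h₀.mono ?_)
  · rw [← sequent_cons_left]
    refine sequent_subset_sequent (fun B hB => ?_) (subset_of_le (Multiset.le_add_left ..))
    simp only [mem_add, mem_cons, mem_replicate] at hB ⊢
    tauto
  · rw [← sequent_cons_right]
    refine sequent_subset_sequent (subset_of_le (Multiset.le_add_right ..)) (fun B hB => ?_)
    simp only [mem_add, mem_cons, mem_replicate] at hB ⊢
    tauto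

theorem Refutable.of_gm (hAx : Ax.CombinationClosed) (h : GM Ax cut Γ Δ) :
    Refutable Ax (sequent Γ Δ) := by
  induction h with
  | @init _ _ m => exact .init (m := m) (mem_cons_self ..) (mem_cons_self ..)
  | wkL _ ih | wkR _ ih | conL _ ih | conR _ ih =>
    exact ih.mono (by simp [sequent_cons_left, sequent_cons_right])
  | @ruleM A B _ _ ih => exact of_marked 0 {A} {B} 0 (by constructor <;> simp [*]) ih
  | @ruleN A _ _ ih => exact of_marked 0 0 {A} 0 (by constructor <;> simp [*]) ih
  | @rule4 A B _ _ ih => exact of_marked {A} 0 {B} 0 (by constructor <;> simp [*]) ih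
  | @rule5 A B _ _ ih => exact of_marked 0 0 {A} {B} (by constructor <;> simp [*]) ih
  | @ruleP A _ _ ih => exact of_marked 0 {A} 0 0 (by constructor <;> simp [*]) ih
  | @ruleD A B _ _ ih => exact of_marked 0 {A, B} 0 0 (by constructor <;> simp [*]) ih
  | @ruleD4 A B _ h4 hd _ ih =>
    have hpd : Ax.p = true ∨ Ax.d = true := hd.symm.imp_left And.left
    rw [pair_comm] at ih ⊢
    exact of_marked {B} {A} 0 0 (by constructor <;> simp [*]) ih
  | @ruleD5 A B _ h5 hd _ ih =>
    have hpd : Ax.p = true ∨ Ax.d = true := hd.symm.imp_left And.left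
    exact of_marked 0 {A} 0 {B} (by constructor <;> simp [*]) ih
  | @ruleC S A _ _ _ ih =>
    simpa using of_marked 0 S {A} 0 (by constructor <;> simp_all [count_replicate]) (by simpa)
  | @ruleCD S _ _ _ ih =>
    simpa using of_marked 0 S 0 0 (by constructor <;> simp_all [count_replicate]) (by simpa)
  | @ruleC4 G S A _ _ _ _ ih | @ruleK4 G S A _ _ _ _ ih =>
    simpa using of_marked G S {A} 0 (by constructor <;> simp_all [count_replicate]) (by simpa)
  | @ruleCD4 G S _ _ _ _ ih =>
    simpa using of_marked G S 0 0 (by constructor <;> simp_all [count_replicate]) (by simpa)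
  | @ruleK45 G S E A _ _ _ _ _ ih =>
    exact of_marked G S {A} E (by constructor <;> simp_all [count_replicate]) ih
  | @ruleKD45 G S E _ _ _ _ _ _ ih =>
    simpa using of_marked G S 0 E (by constructor <;> simp_all [count_replicate]) (by simpa)
  | ruleT hT => exact absurd hT (by simp [hAx.t])
  | mcut _ _ _ _ _ ih₀ ih₁ => exact mcut hAx ih₀ ih₁
  | _ =>
    simp only [sequent_cons_left, sequent_cons_right] at *
    rw [insert_iff]
    simp [Signed.branches, Set.insert_union, *]

end

theorem of_subset_of_weaken_of_contract {α : Type*} {P : Multiset α → Prop}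
    (weaken : ∀ a s, P s → P (a ::ₘ s)) (contract : ∀ a s, P (a ::ₘ a ::ₘ s) → P (a ::ₘ s))
    {s t : Multiset α} (hst : s ⊆ t) (hs : P s) : P t := by
  replace hs : P (t + s) := by
    clear hst
    induction t using Multiset.induction_on with
    | empty => rwa [Multiset.zero_add]
    | cons a t ih => exact Multiset.cons_add a t s ▸ weaken a _ ih
  induction s using Multiset.induction_on with
  | empty => rwa [Multiset.add_zero] at hs
  | cons a s ih =>
    obtain ⟨ha, hst⟩ := Multiset.cons_subset.1 hst
    refine ih hst ?_
    obtain ⟨t, rfl⟩ := Multiset.exists_cons_of_mem ha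
    rw [Multiset.add_cons, Multiset.cons_add] at hs
    exact Multiset.cons_add a t s ▸ contract a _ hs

namespace GM
open Multiset Mode

variable {Ax : MAx} {cut : Bool} {Γ Γ' Δ Δ' G S D E : Multiset Fm}

theorem mono (hΓ : Γ ⊆ Γ') (hΔ : Δ ⊆ Δ') (h : GM Ax cut Γ Δ) : GM Ax cut Γ' Δ' :=
  of_subset_of_weaken_of_contract (P := GM Ax cut Γ') (fun _ _ => .wkR) (fun _ _ => .conR) hΔ <|
    of_subset_of_weaken_of_contract (P := (GM Ax cut · Δ)) (fun _ _ => .wkL) (fun _ _ => .conL) hΓ h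

theorem of_branches {F : Signed} (hF : F ∈ sequent Γ Δ)
    (h : ∀ b ∈ F.branches, ∀ Γ' Δ', b ∪ sequent Γ Δ ⊆ sequent Γ' Δ' → GM Ax cut Γ' Δ') :
    GM Ax cut Γ Δ := by
  rcases F with (A | A)
  · obtain ⟨Γ, rfl⟩ := exists_cons_of_mem (ant_mem_sequent.1 hF)
    simp only [sequent_cons_left] at h
    cases A with
    | bot => exact .botL
    | var | box | top => exact h _ rfl _ _ (by grind [sequent_cons_left])
    | neg A => exact .conL (.negL (h _ rfl _ _ (by grind [sequent_cons_left, sequent_cons_right])))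
    | and A B => exact .conL (.andL (h _ rfl _ _ (by grind [sequent_cons_left])))
    | or A B =>
      exact .conL (.orL (h _ (.inl rfl) _ _ (by grind [sequent_cons_left]))
        (h _ (.inr rfl) _ _ (by grind [sequent_cons_left])))
    | imp A B =>
      exact .conL (.impL (h _ (.inl rfl) _ _ (by grind [sequent_cons_left]))
        (h _ (.inr rfl) _ _ (by grind [sequent_cons_left, sequent_cons_right])))
  · obtain ⟨Δ, rfl⟩ := exists_cons_of_mem (suc_mem_sequent.1 hF)
    simp only [sequent_cons_right] at h
    cases A with
    | top => exact .topR
    | var | box | bot => exact h _ rfl _ _ (by grind [sequent_cons_right])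
    | neg A => exact .conR (.negR (h _ rfl _ _ (by grind [sequent_cons_left, sequent_cons_right])))
    | or A B => exact .conR (.orR (h _ rfl _ _ (by grind [sequent_cons_right])))
    | imp A B =>
      exact .conR (.impR (h _ rfl _ _ (by grind [sequent_cons_left, sequent_cons_right])))
    | and A B =>
      exact .conR (.andR (h _ (.inl rfl) _ _ (by grind [sequent_cons_right]))
        (h _ (.inr rfl) _ _ (by grind [sequent_cons_right])))

theorem modal_of_c (hAx : Ax.CombinationClosed) (hc : Ax.c = true)
    (hr : Ax.Admits (replicate G.card keptAnt + replicate S.card openAnt +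
      replicate D.card openSuc + replicate E.card keptSuc))
    (h : GM Ax cut (G.map .box + S) (D + E.map .box)) :
    GM Ax cut (G.map .box + S.map .box) (D.map .box + E.map .box) := by
  obtain ⟨hD, h4, h5, hn, hp, -, -, -⟩ := hr
  have := hAx.n
  have := hAx.four
  simp only [count_add, count_replicate, reduceCtorEq, reduceIte, add_zero, zero_add, ne_eq,
    card_eq_zero, Nat.add_eq_zero_iff, and_imp] at hD h4 h5 hn hp
  rcases D.empty_or_exists_mem with rfl | ⟨A, hA⟩
  · rcases eq_or_ne S 0 with rfl | hS
    · simpa using h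
    replace hp := hp rfl hS
    rcases eq_or_ne E 0 with rfl | hE
    · rcases eq_or_ne G 0 with rfl | hG
      · simpa using ruleCD hc hp (by simpa using h)
      · simpa using ruleCD4 hc (h4 hG) hp (by simpa using h)
    · simpa using ruleKD45 (by grind) (by grind) (by grind) (by grind) hp (by simpa using h)
  · obtain ⟨D, rfl⟩ := exists_cons_of_mem hA
    obtain rfl : D = 0 := by simpa using hD
    rcases eq_or_ne E 0 with rfl | hE
    · rcases eq_or_ne G 0 with rfl | hG
      · rcases eq_or_ne S 0 with rfl | hS
        · exact ruleN (by grind) h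
        · simpa using ruleC hc hS (by simpa using h)
      · exact ruleC4 hc (h4 hG) (by simp [hG]) h
    · simpa using ruleK45 (by grind) (by grind) (by grind) (by grind) (by simpa using h)

theorem modal_of_not_c (hc : Ax.c = false)
    (hr : Ax.Admits (replicate G.card keptAnt + replicate S.card openAnt +
      replicate D.card openSuc + replicate E.card keptSuc))
    (h : GM Ax cut (G.map .box + S) (D + E.map .box)) :
    GM Ax cut (G.map .box + S.map .box) (D.map .box + E.map .box) := by
  obtain ⟨hD, h4, h5, hn, hp, hcard, hd, hd45⟩ := hr
  simp only [count_add, count_replicate, reduceCtorEq, reduceIte, add_zero, zero_add, ne_eq,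
    card_eq_zero, Nat.add_eq_zero_iff, and_imp, hc, card_add, card_replicate, forall_const,
    not_and] at hD h4 h5 hn hp hcard hd hd45
  rcases Nat.le_one_iff_eq_zero_or_eq_one.1 hD with hD₀ | hD₁
  · obtain rfl := card_eq_zero.1 hD₀
    have hGSE : S.card = 0 ∨ S.card = 2 ∧ G.card = 0 ∧ E.card = 0 ∨
        S.card = 1 ∧ (G.card = 0 ∧ E.card = 0 ∨ G.card = 1 ∧ E.card = 0 ∨
          G.card = 0 ∧ E.card = 1) := by
      simp only [card_zero] at hcard; lia
    simp only [card_eq_zero, card_eq_one, card_eq_two] at hGSE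
    rcases hGSE with rfl | ⟨⟨A, B, rfl⟩, rfl, rfl⟩ |
      ⟨⟨A, rfl⟩, ⟨rfl, rfl⟩ | ⟨⟨B, rfl⟩, rfl⟩ | ⟨rfl, ⟨B, rfl⟩⟩⟩
    · exact h
    · exact ruleD (hd rfl) h
    · rcases hp rfl (by simp) with hp | hd
      · exact ruleP hp h
      · exact conL (ruleD hd (wkL h))
    · replace hd45 := hd45 (by simp) (by simp)
      have hAB : GM Ax cut {.box B, A} 0 := h
      change GM Ax cut {.box B, .box A} 0
      rw [pair_comm] at hAB ⊢
      exact ruleD4 hc (h4 (by simp)) (hd45.imp_right fun h => ⟨h.1, h.2.2⟩) hAB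
    · exact ruleD5 hc (h5 (by simp)) ((hd45 (by simp) (by simp)).imp_right fun h => ⟨h.1, h.2.1⟩) h
  · obtain ⟨A, rfl⟩ := card_eq_one.1 hD₁
    have hGSE : G.card = 0 ∧ S.card = 0 ∧ E.card = 0 ∨ S.card = 1 ∧ G.card = 0 ∧ E.card = 0 ∨
        G.card = 1 ∧ S.card = 0 ∧ E.card = 0 ∨ E.card = 1 ∧ G.card = 0 ∧ S.card = 0 := by
      simp only [card_singleton] at hcard; lia
    simp only [card_eq_zero, card_eq_one] at hGSE
    rcases hGSE with ⟨rfl, rfl, rfl⟩ | ⟨⟨B, rfl⟩, rfl, rfl⟩ | ⟨⟨B, rfl⟩, rfl, rfl⟩ |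
      ⟨⟨B, rfl⟩, rfl, rfl⟩
    · exact ruleN (hn (by simp) rfl rfl) h
    · exact ruleM hc h
    · exact rule4 (h4 (by simp)) h
    · exact rule5 (h5 (by simp)) h

theorem of_refutable (hAx : Ax.CombinationClosed) {X : Set Signed} (h : Refutable Ax X)
    (hX : X ⊆ sequent Γ Δ) : GM Ax cut Γ Δ := by
  induction h generalizing Γ Δ with
  | init hant hsuc =>
    obtain ⟨Γ, rfl⟩ := exists_cons_of_mem (hX hant)
    obtain ⟨Δ, rfl⟩ := exists_cons_of_mem (hX hsuc)
    exact .init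
  | branch hF _ ih =>
    exact of_branches (hX hF) fun b hb _ _ hb' =>
      ih b hb ((Set.union_subset_union_right b hX).trans hb')
  | @modal r X hr _ hs ih =>
    obtain ⟨G, S, D, E, rfl⟩ := exists_marked r
    rw [map_fst_marked] at hr
    rw [modalPremiss_marked] at ih
    rw [modalConclusion_marked] at hs
    have hs := hs.trans hX
    refine mono (fun A hA => hs (ant_mem_sequent.2 hA)) (fun A hA => hs (suc_mem_sequent.2 hA)) ?_
    cases hc : Ax.c with
    | true => exact (ih subset_rfl).modal_of_c hAx hc hr
    | false => exact (ih subset_rfl).modal_of_not_c hc hr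

end GM

theorem MAx.CombinationClosed.of_five_eq_false {Ax : MAx} (ht : Ax.t = false)
    (h5 : Ax.five = false) : Ax.CombinationClosed where
  t := ht
  n h := by simp [h5] at h
  four h := by simp [h5] at h

theorem MAx.CombinationClosed.of_mem {Ax : MAx}
    (h : Ax ∈ [axM5, axMP5, axM45, axMP45, axMD45, axK45, axKD45]) : Ax.CombinationClosed := by
  fin_cases h <;> constructor <;> decide

theorem multicut_elimination_general {Ax : MAx} (hAx : Ax.CombinationClosed) {Γ Δ : Multiset Fm}
    (h : GM Ax true Γ Δ) : GM Ax false Γ Δ :=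
  .of_refutable hAx (.of_gm hAx h) subset_rfl

/-- Elimination of the multicut rule: for `L` the logic `M𝒜` with
`𝒜 ⊆ {N, C, P, D, 4}` or one of `M5, MP5, M45, MP45, MD45, K45, KD45`, every
derivation in `G_LConW` extended with the multicut rule can be converted into
a derivation in `G_LConW` (without multicut) with the same endsequent. -/
theorem multicut_elimination (Ax : MAx)
    (hL : (Ax.t = false ∧ Ax.five = false) ∨
      Ax ∈ [axM5, axMP5, axM45, axMP45, axMD45, axK45, axKD45]) :
    ∀ Γ Δ : Multiset Fm, GM Ax true Γ Δ → GM Ax false Γ Δ := by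
  have hAx : Ax.CombinationClosed := hL.elim (fun h => .of_five_eq_false h.1 h.2) .of_mem
  exact fun _ _ => multicut_elimination_general hAx
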